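/- For every natural number r ≥ 1, the series ∑_{n=1}^∞ (1/((4√5)^n · α^{rn} · F_r^n)) · binom(2n,n) · (H_{2n} − H_n) equals −(√(α^r F_r √5)/√(α^r F_r √5 − 1)) · ln((√(α^r F_r √5) + √(α^r F_r √5 − 1))/(2√(α^r F_r √5))). -/

import Mathlib

/-!
Put `X = α ^ r * F_r * √5` and `x = 1 / X`. The series is then the value at `x` of
`A(x) = ∑ binom(2n,n) (H_{2n} - H_n) (x/4)^n`, and `X > 1`, so `0 < x < 1`. The claim becomes
`√(1-x) A(x) = -log ((1 + √(1-x)) / 2)` on `[0, 1)` (`aSeries_eq`).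

The recurrence for the coefficients of `A` (`aCoeff_rec`) says that
`2 (1 - x) A' = A + S` (`aSeries_ode`), where `S(x) = ∑ binom(2n,n) / (2n+2) (x/4)^n` is half the
Catalan generating function. Likewise `S` satisfies a first-order linear equation (`sSeries_ode`),
by which `(1 - x S) / √(1-x)` has derivative zero; hence `x S = 1 - √(1-x)` and
`S = 1 / (1 + √(1-x))` (`sSeries_eq'`). It follows that
`(√(1-x) A)' = 1 / (2 √(1-x) (1 + √(1-x)))`, which is also the derivative of
`-log ((1 + √(1-x)) / 2)`; both functions vanish at `0`.
-/

open Real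

/-- The `n`-th harmonic number `H n = ∑_{k=1}^n 1/k`. -/
noncomputable def H (n : ℕ) : ℝ := ∑ k ∈ Finset.range n, 1 / (k + 1 : ℝ)

/-- The golden ratio `α = (1 + √5)/2`. -/
noncomputable def α : ℝ := (1 + Real.sqrt 5) / 2

/-! ### The coefficients -/

/-- `binom(2n,n) / 4^n`, the coefficient of `x^n` in `(1 - x)^(-1/2)`. -/
noncomputable def cbCoeff (n : ℕ) : ℝ := (Nat.centralBinom n : ℝ) / 4 ^ n

lemma cbCoeff_zero : cbCoeff 0 = 1 := by simp [cbCoeff]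

lemma cbCoeff_succ (n : ℕ) : cbCoeff (n + 1) = cbCoeff n * ((2 * n + 1) / (2 * n + 2)) := by
  have h : ((n : ℝ) + 1) * (Nat.centralBinom (n + 1) : ℝ)
      = 2 * (2 * n + 1) * (Nat.centralBinom n : ℝ) := by
    exact_mod_cast Nat.succ_mul_centralBinom_succ n
  have hn : (n : ℝ) + 1 ≠ 0 := by positivity
  have h' : (Nat.centralBinom (n + 1) : ℝ)
      = 2 * (2 * n + 1) * (Nat.centralBinom n : ℝ) / ((n : ℝ) + 1) := by
    rw [eq_div_iff hn, mul_comm, h]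
  rw [cbCoeff, cbCoeff, h', show (2 * (n : ℝ) + 2) = 2 * (n + 1) by ring, pow_succ]
  field_simp
  ring

lemma cbCoeff_nonneg (n : ℕ) : 0 ≤ cbCoeff n := by unfold cbCoeff; positivity

lemma cbCoeff_le_one (n : ℕ) : cbCoeff n ≤ 1 := by
  induction n with
  | zero => simp [cbCoeff_zero]
  | succ n ih =>
    rw [cbCoeff_succ]
    refine mul_le_one₀ ih (by positivity) ?_
    rw [div_le_one (by positivity)]
    linarith

lemma H_succ (n : ℕ) : H (n + 1) = H n + 1 / (n + 1 : ℝ) := by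
  rw [H, H, Finset.sum_range_succ]

lemma H_diff_succ (n : ℕ) :
    H (2 * (n + 1)) - H (n + 1)
      = H (2 * n) - H n + 1 / ((2 * n + 1 : ℝ) * (2 * n + 2)) := by
  rw [show 2 * (n + 1) = 2 * n + 1 + 1 by ring, H_succ, H_succ, H_succ]
  push_cast
  have h1 : (2 * (n : ℝ) + 1) ≠ 0 := by positivity
  have h2 : ((n : ℝ) + 1) ≠ 0 := by positivity
  rw [show (2 * (n : ℝ) + 1 + 1) = 2 * (n + 1) by ring,
    show (2 * (n : ℝ) + 2) = 2 * (n + 1) by ring]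
  field_simp
  ring

/-- The upper bound carries the term `1 / (2n+1)` so that the induction closes by telescoping. -/
lemma H_diff_bounds (n : ℕ) :
    0 ≤ H (2 * n) - H n ∧ H (2 * n) - H n ≤ 1 - 1 / (2 * n + 1 : ℝ) := by
  induction n with
  | zero => simp
  | succ n ih =>
    rw [H_diff_succ]
    refine ⟨add_nonneg ih.1 (by positivity), ?_⟩
    have h : 1 / ((2 * n + 1 : ℝ) * (2 * n + 2)) ≤ 1 / (2 * n + 1 : ℝ) - 1 / (2 * n + 3 : ℝ) := by
      rw [div_sub_div _ _ (by positivity) (by positivity), div_le_div_iff₀ (by positivity)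
        (by positivity)]
      have : (0 : ℝ) ≤ n := n.cast_nonneg
      nlinarith [mul_nonneg this this, mul_nonneg this (mul_nonneg this this)]
    have h3 : (2 * ((n + 1 : ℕ) : ℝ) + 1) = 2 * n + 3 := by push_cast; ring
    rw [h3]
    linarith [ih.2]

/-- The coefficients `binom(2n,n) (H_{2n} - H_n) / 4^n` of the series to be summed. -/
noncomputable def aCoeff (n : ℕ) : ℝ := cbCoeff n * (H (2 * n) - H n)

/-- Half the normalised Catalan numbers, `binom(2n,n) / (4^n (2n+2))`. -/
noncomputable def sCoeff (n : ℕ) : ℝ := cbCoeff n / (2 * n + 2)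

lemma abs_aCoeff_le_one (n : ℕ) : |aCoeff n| ≤ 1 := by
  obtain ⟨h0, h1⟩ := H_diff_bounds n
  have h2 : (0 : ℝ) ≤ 1 / (2 * n + 1 : ℝ) := by positivity
  rw [aCoeff, abs_of_nonneg (mul_nonneg (cbCoeff_nonneg n) h0)]
  exact mul_le_one₀ (cbCoeff_le_one n) h0 (by linarith)

lemma abs_sCoeff_le_one (n : ℕ) : |sCoeff n| ≤ 1 := by
  have := cbCoeff_le_one n
  rw [sCoeff, abs_of_nonneg (div_nonneg (cbCoeff_nonneg n) (by positivity)),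
    div_le_one (by positivity)]
  have : (0 : ℝ) ≤ n := n.cast_nonneg
  linarith

lemma aCoeff_rec (n : ℕ) :
    2 * ((n + 1 : ℝ) * aCoeff (n + 1)) = 2 * (n * aCoeff n) + aCoeff n + sCoeff n := by
  rw [aCoeff, aCoeff, sCoeff, cbCoeff_succ, H_diff_succ]
  have h1 : (2 * (n : ℝ) + 1) ≠ 0 := by positivity
  have h2 : ((n : ℝ) + 1) ≠ 0 := by positivity
  rw [show (2 * (n : ℝ) + 2) = 2 * (n + 1) by ring]
  field_simp

lemma sCoeff_rec (n : ℕ) :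
    2 * ((n + 1 : ℝ) * sCoeff (n + 1)) + 2 * sCoeff (n + 1)
      = 2 * (n * sCoeff n) + sCoeff n := by
  rw [sCoeff, sCoeff, cbCoeff_succ]
  push_cast
  have h2 : ((n : ℝ) + 1) ≠ 0 := by positivity
  have h3 : ((n : ℝ) + 2) ≠ 0 := by positivity
  rw [show (2 * (n : ℝ) + 2) = 2 * (n + 1) by ring,
    show (2 * ((n : ℝ) + 1) + 2) = 2 * (n + 2) by ring]
  field_simp
  ring

/-! ### Power series with bounded coefficients -/

section PowerSeries

variable {b : ℕ → ℝ}

lemma summable_coeff (hb : ∀ n, |b n| ≤ 1) {x : ℝ} (hx : |x| < 1) :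
    Summable fun n => b n * x ^ n := by
  refine Summable.of_norm_bounded (summable_geometric_of_lt_one (abs_nonneg x) hx) fun n => ?_
  rw [norm_mul, norm_pow, Real.norm_eq_abs, Real.norm_eq_abs]
  exact mul_le_of_le_one_left (by positivity) (hb n)

lemma summable_deriv_coeff (hb : ∀ n, |b n| ≤ 1) {x : ℝ} (hx : |x| < 1) :
    Summable fun n : ℕ => (n : ℝ) * b n * x ^ n := by
  have h := summable_pow_mul_geometric_of_norm_lt_one 1 (r := |x|) (by simpa using hx)
  refine Summable.of_norm_bounded h fun n => ?_
  rw [norm_mul, norm_mul, norm_pow, Real.norm_eq_abs, Real.norm_eq_abs, Real.norm_eq_abs,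
    Nat.abs_cast, pow_one]
  exact mul_le_mul_of_nonneg_right (mul_le_of_le_one_right (by positivity) (hb n)) (by positivity)

/-- The exponent `n - 1` is truncated at `n = 0`, where the factor `n` vanishes. -/
lemma summable_deriv_coeff' (hb : ∀ n, |b n| ≤ 1) {x : ℝ} (hx : |x| < 1) :
    Summable fun n : ℕ => (n : ℝ) * b n * x ^ (n - 1) := by
  rcases eq_or_ne x 0 with rfl | h0
  · refine summable_of_ne_finset_zero (s := {1}) fun n hn => ?_
    rcases n with _ | _ | n
    · simp
    · simp at hn
    · simp
  · refine ((summable_deriv_coeff hb hx).mul_right x⁻¹).congr fun n => ?_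
    rcases n with _ | n
    · simp
    · rw [Nat.add_sub_cancel, pow_succ]
      field_simp

lemma hasDerivAt_powerSeries (hb : ∀ n, |b n| ≤ 1) {x : ℝ} (hx : |x| < 1) :
    HasDerivAt (fun y => ∑' n, b n * y ^ n) (∑' n : ℕ, (n + 1 : ℝ) * b (n + 1) * x ^ n) x := by
  obtain ⟨ρ, hxρ, hρ⟩ := exists_between hx
  have hρ0 : 0 ≤ ρ := (abs_nonneg x).trans hxρ.le
  have hu := summable_deriv_coeff' (b := fun _ => 1) (by simp) (x := ρ)
    (by rwa [abs_of_nonneg hρ0])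
  have key := hasDerivAt_tsum_of_isPreconnected (t := Metric.ball (0 : ℝ) ρ)
    (g := fun n y => b n * y ^ n) (g' := fun n y => (n : ℝ) * b n * y ^ (n - 1)) (y₀ := 0) (y := x)
    hu Metric.isOpen_ball (convex_ball (0 : ℝ) ρ).isPreconnected
    (fun n y _ => by
      have := (hasDerivAt_pow n y).const_mul (b n)
      exact this.congr_deriv (by ring))
    (fun n y hy => by
      rw [mem_ball_zero_iff, Real.norm_eq_abs] at hy
      rw [norm_mul, norm_mul, norm_pow, Real.norm_eq_abs, Real.norm_eq_abs, Real.norm_eq_abs,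
        Nat.abs_cast]
      have := hb n
      gcongr)
    (Metric.mem_ball_self ((abs_nonneg x).trans_lt hxρ))
    (summable_coeff hb (by simp)) (by simpa using hxρ)
  refine key.congr_deriv ?_
  rw [(summable_deriv_coeff' hb hx).tsum_eq_zero_add]
  simp

lemma mul_deriv_powerSeries (hb : ∀ n, |b n| ≤ 1) {x : ℝ} (hx : |x| < 1) :
    x * (∑' n : ℕ, (n + 1 : ℝ) * b (n + 1) * x ^ n) = ∑' n : ℕ, (n : ℝ) * b n * x ^ n := by
  rw [(summable_deriv_coeff hb hx).tsum_eq_zero_add, ← tsum_mul_left]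
  simp only [Nat.cast_zero, zero_mul, zero_add]
  refine tsum_congr fun n => ?_
  push_cast
  ring

lemma summable_deriv_shift (hb : ∀ n, |b n| ≤ 1) {x : ℝ} (hx : |x| < 1) :
    Summable fun n : ℕ => (n + 1 : ℝ) * b (n + 1) * x ^ n := by
  simpa using (summable_nat_add_iff 1).2 (summable_deriv_coeff' hb hx)

end PowerSeries

/-! ### Differential equations and closed forms -/

lemma aSeries_ode {x : ℝ} (hx : |x| < 1) :
    2 * (1 - x) * (∑' n : ℕ, (n + 1 : ℝ) * aCoeff (n + 1) * x ^ n)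
      = (∑' n, aCoeff n * x ^ n) + ∑' n, sCoeff n * x ^ n := by
  have h1 := mul_deriv_powerSeries abs_aCoeff_le_one hx
  have h2 := summable_deriv_coeff abs_aCoeff_le_one hx
  have h3 := summable_coeff abs_aCoeff_le_one hx
  have h4 := summable_coeff abs_sCoeff_le_one hx
  have h5 : 2 * (∑' n : ℕ, (n + 1 : ℝ) * aCoeff (n + 1) * x ^ n)
      = 2 * (∑' n : ℕ, (n : ℝ) * aCoeff n * x ^ n) + (∑' n, aCoeff n * x ^ n)
        + ∑' n, sCoeff n * x ^ n := by
    rw [← tsum_mul_left, ← tsum_mul_left, ← (h2.mul_left 2).tsum_add h3,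
      ← ((h2.mul_left 2).add h3).tsum_add h4]
    refine tsum_congr fun n => ?_
    linear_combination x ^ n * aCoeff_rec n
  linear_combination h5 - 2 * h1

lemma sSeries_ode {x : ℝ} (hx : |x| < 1) :
    2 * x * (1 - x) * (∑' n : ℕ, (n + 1 : ℝ) * sCoeff (n + 1) * x ^ n)
      + (2 - x) * (∑' n, sCoeff n * x ^ n) = 1 := by
  have h1 := mul_deriv_powerSeries abs_sCoeff_le_one hx
  have h2 := summable_deriv_coeff abs_sCoeff_le_one hx
  have h3 := summable_coeff abs_sCoeff_le_one hx
  have h4 := summable_deriv_shift abs_sCoeff_le_one hx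
  have h6 := (summable_nat_add_iff 1).2 h3
  have h7 : (∑' n, sCoeff n * x ^ n) = 1 / 2 + ∑' n, sCoeff (n + 1) * x ^ (n + 1) := by
    rw [h3.tsum_eq_zero_add]
    simp [sCoeff, cbCoeff_zero]
  have h5 : 2 * x * (∑' n : ℕ, (n + 1 : ℝ) * sCoeff (n + 1) * x ^ n)
        + 2 * ∑' n, sCoeff (n + 1) * x ^ (n + 1)
      = 2 * x * (∑' n : ℕ, (n : ℝ) * sCoeff n * x ^ n) + x * (∑' n, sCoeff n * x ^ n) := by
    rw [← tsum_mul_left, ← tsum_mul_left, ← tsum_mul_left, ← tsum_mul_left,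
      ← (h4.mul_left (2 * x)).tsum_add (h6.mul_left 2),
      ← (h2.mul_left (2 * x)).tsum_add (h3.mul_left x)]
    refine tsum_congr fun n => ?_
    linear_combination x ^ (n + 1) * sCoeff_rec n
  linear_combination h5 + 2 * h7 - 2 * x * h1

lemma hasDerivAt_sqrt_one_sub {x : ℝ} (hx : x < 1) :
    HasDerivAt (fun y => √(1 - y)) (-1 / (2 * √(1 - x))) x :=
  ((hasDerivAt_id x).const_sub 1).sqrt (by simp only [id]; linarith)

lemma eq_of_hasDerivAt_zero {f : ℝ → ℝ} (hf : ∀ y, |y| < 1 → HasDerivAt f 0 y) {x : ℝ}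
    (hx0 : 0 ≤ x) (hx1 : x < 1) : f x = f 0 := by
  have habs : ∀ y ∈ Set.Icc 0 x, |y| < 1 := fun y hy => by
    rw [abs_of_nonneg hy.1]; exact hy.2.trans_lt hx1
  exact constant_of_has_deriv_right_zero
    (fun y hy => (hf y (habs y hy)).continuousAt.continuousWithinAt)
    (fun y hy => (hf y (habs y ⟨hy.1, hy.2.le⟩)).hasDerivWithinAt) x ⟨hx0, le_rfl⟩

/-- `(1 - x S) / √(1-x)` is constant, with value `1` at `0`. -/
lemma sSeries_eq {x : ℝ} (hx0 : 0 ≤ x) (hx1 : x < 1) :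
    x * (∑' n, sCoeff n * x ^ n) = 1 - √(1 - x) := by
  have h := eq_of_hasDerivAt_zero
    (f := fun y => (1 - y * ∑' n, sCoeff n * y ^ n) / √(1 - y)) (fun y hy => by
      have hy1 : 0 < 1 - y := by linarith [(abs_lt.1 hy).2]
      have hu : 0 < √(1 - y) := Real.sqrt_pos.2 hy1
      have hu2 := Real.sq_sqrt hy1.le
      have hode := sSeries_ode hy
      have hd := (((hasDerivAt_id y).mul (hasDerivAt_powerSeries abs_sCoeff_le_one hy)).const_sub
        1).div (hasDerivAt_sqrt_one_sub (x := y) (by linarith)) hu.ne'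
      refine hd.congr_deriv ?_
      simp only [id, Pi.mul_apply]
      set S := ∑' n, sCoeff n * y ^ n
      set S' := ∑' n : ℕ, (n + 1 : ℝ) * sCoeff (n + 1) * y ^ n
      set u := √(1 - y)
      rw [div_eq_zero_iff]
      left
      field_simp
      rw [hu2]
      linear_combination -hode) hx0 hx1
  have hu : 0 < √(1 - x) := Real.sqrt_pos.2 (by linarith)
  simp only [zero_mul, sub_zero, Real.sqrt_one, div_one] at h
  rw [div_eq_iff hu.ne'] at h
  linarith

/-- The form `S = 1 / (1 + √(1-x))`, free of the removable singularity of `(1 - √(1-x)) / x` at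
`x = 0`. -/
lemma sSeries_eq' {x : ℝ} (hx0 : 0 ≤ x) (hx1 : x < 1) :
    (∑' n, sCoeff n * x ^ n) * (1 + √(1 - x)) = 1 := by
  rcases hx0.eq_or_lt with rfl | hx
  · have : (∑' n, sCoeff n * (0 : ℝ) ^ n) = 1 / 2 := by
      rw [tsum_eq_single 0 (fun n hn => by simp [hn])]
      simp [sCoeff, cbCoeff_zero]
    rw [this]; norm_num
  · have h := sSeries_eq hx0 hx1
    have hu2 := Real.sq_sqrt (show 0 ≤ 1 - x by linarith)
    apply mul_left_cancel₀ hx.ne'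
    linear_combination (1 + √(1 - x)) * h - hu2

/-- `√(1-x) A(x) + log ((1 + √(1-x)) / 2)` is constant, with value `0` at `0`. -/
lemma aSeries_eq {x : ℝ} (hx0 : 0 ≤ x) (hx1 : x < 1) :
    √(1 - x) * (∑' n, aCoeff n * x ^ n) = -Real.log ((1 + √(1 - x)) / 2) := by
  have h := constant_of_has_deriv_right_zero (a := 0) (b := x)
    (f := fun y => √(1 - y) * (∑' n, aCoeff n * y ^ n) + Real.log ((1 + √(1 - y)) / 2))
  have hder : ∀ y ∈ Set.Icc 0 x, HasDerivAt
      (fun y => √(1 - y) * (∑' n, aCoeff n * y ^ n) + Real.log ((1 + √(1 - y)) / 2)) 0 y := by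
    intro y hy
    have hy1 : 0 < 1 - y := by linarith [hy.2]
    have hya : |y| < 1 := by rw [abs_of_nonneg hy.1]; linarith
    have hu : 0 < √(1 - y) := Real.sqrt_pos.2 hy1
    have hu2 := Real.sq_sqrt hy1.le
    have hode := aSeries_ode hya
    have hs := sSeries_eq' hy.1 (by linarith)
    have hsq := hasDerivAt_sqrt_one_sub (x := y) (by linarith)
    have hd := (hsq.mul (hasDerivAt_powerSeries abs_aCoeff_le_one hya)).add
      (((hsq.const_add 1).div_const 2).log (by positivity))
    refine hd.congr_deriv ?_
    set S := ∑' n, sCoeff n * y ^ n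
    set A := ∑' n, aCoeff n * y ^ n
    set A' := ∑' n : ℕ, (n + 1 : ℝ) * aCoeff (n + 1) * y ^ n
    set u := √(1 - y)
    have hu1 : (1 + u) ≠ 0 := by positivity
    have hS : S = 1 / (1 + u) := by rw [eq_div_iff hu1, hs]
    rw [hS, ← hu2] at hode
    field_simp at hode ⊢
    linear_combination hode
  have h' := h (fun y hy => (hder y hy).continuousAt.continuousWithinAt)
    (fun y hy => (hder y ⟨hy.1, hy.2.le⟩).hasDerivWithinAt) x ⟨hx0, le_rfl⟩
  have hA0 : (∑' n, aCoeff n * (0 : ℝ) ^ n) = 0 := by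
    rw [tsum_eq_single 0 (fun n hn => by simp [hn])]
    simp [aCoeff]
  simp only [hA0, sub_zero, Real.sqrt_one, mul_zero, zero_add] at h'
  norm_num at h'
  linarith

/-! ### Specialisation -/

/-- This places the evaluation point inside the disc of convergence, and makes both square roots
in the closed form those of positive numbers. -/
lemma one_lt_param {r : ℕ} (hr : 1 ≤ r) : 1 < α ^ r * (Nat.fib r : ℝ) * √5 := by
  have h5 : (2 : ℝ) < √5 := by
    rw [Real.lt_sqrt (by norm_num)]; norm_num
  have hα : 1 ≤ α := by unfold α; linarith
  have h1 : 1 ≤ α ^ r := one_le_pow₀ hα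
  have h2 : (1 : ℝ) ≤ Nat.fib r := by exact_mod_cast Nat.fib_pos.2 hr
  nlinarith [one_le_mul_of_one_le_of_one_le h1 h2]

theorem stmt_4 (r : ℕ) (hr : 1 ≤ r) :
    ∑' n : ℕ,
        (1 / ((4 * Real.sqrt 5) ^ (n + 1) * α ^ (r * (n + 1)) *
          ((Nat.fib r : ℝ)) ^ (n + 1))) *
        (Nat.choose (2 * (n + 1)) (n + 1) : ℝ) * (H (2 * (n + 1)) - H (n + 1))
      = -(Real.sqrt (α ^ r * (Nat.fib r : ℝ) * Real.sqrt 5) /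
          Real.sqrt (α ^ r * (Nat.fib r : ℝ) * Real.sqrt 5 - 1)) *
        Real.log ((Real.sqrt (α ^ r * (Nat.fib r : ℝ) * Real.sqrt 5) +
            Real.sqrt (α ^ r * (Nat.fib r : ℝ) * Real.sqrt 5 - 1)) /
          (2 * Real.sqrt (α ^ r * (Nat.fib r : ℝ) * Real.sqrt 5))) := by
  have hX := one_lt_param hr
  -- The `n`-th summand is the term of index `n + 1` of the power series.
  have hterm : ∀ n : ℕ, (1 / ((4 * √5) ^ (n + 1) * α ^ (r * (n + 1)) *
          ((Nat.fib r : ℝ)) ^ (n + 1))) *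
        (Nat.choose (2 * (n + 1)) (n + 1) : ℝ) * (H (2 * (n + 1)) - H (n + 1))
      = aCoeff (n + 1) * (α ^ r * (Nat.fib r : ℝ) * √5)⁻¹ ^ (n + 1) := fun n => by
    rw [aCoeff, cbCoeff, Nat.centralBinom_eq_two_mul_choose, pow_mul, inv_pow, mul_pow, mul_pow,
      mul_pow]
    simp only [div_eq_mul_inv, mul_inv, one_mul]
    ring
  simp only [hterm]
  generalize α ^ r * (Nat.fib r : ℝ) * √5 = X at hX
  have hX0 : 0 < X := by linarith
  have hx1 : X⁻¹ < 1 := inv_lt_one_of_one_lt₀ hX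
  have hx0 : 0 ≤ X⁻¹ := by positivity
  have hsum := (summable_coeff abs_aCoeff_le_one (x := X⁻¹)
    (by rwa [abs_of_nonneg hx0])).tsum_eq_zero_add
  have hA := aSeries_eq hx0 hx1
  have ha0 : aCoeff 0 = 0 := by simp [aCoeff]
  rw [ha0, zero_mul, zero_add] at hsum
  have hs : 0 < √X := Real.sqrt_pos.2 hX0
  have ht : 0 < √(X - 1) := Real.sqrt_pos.2 (by linarith)
  have hu : √(1 - X⁻¹) = √(X - 1) / √X := by
    rw [← Real.sqrt_div (by linarith), sub_div, div_self hX0.ne', one_div]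
  have harg : (1 + √(X - 1) / √X) / 2 = (√X + √(X - 1)) / (2 * √X) := by
    field_simp
  rw [hsum, hu, harg] at hA
  rw [neg_mul, ← mul_neg, ← hA]
  field_simp
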